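/- Let d ≥ 2 and 0 < s < 1. The renormalized periodic fractional perimeter 𝒫^s_♯ satisfies assumption (H): for every L > 0 and δ > 0 there exist ε₀ ∈ (0,1) and C(δ,L) > 0 such that for every R > 0 and every E ∈ 𝔠_L ∩ 𝔐_R with osc_{𝕋^{d−1}} f_E ≥ δ one has 𝒫^s_♯(E) − 𝒫^s_♯(E_ε) ≥ C(δ,L) ε for all 0 < ε ≤ ε₀. -/

import Mathlib

open MeasureTheory Filter Set
open scoped ENNReal

noncomputable section

/-- Euclidean space `ℝ^m`. -/
abbrev Rm (m : ℕ) : Type := EuclideanSpace ℝ (Fin m)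

/-- The fundamental cube `[0,1)^m`. -/
def cube (m : ℕ) : Set (Rm m) := {x | ∀ i, x i ∈ Set.Ico (0:ℝ) 1}

/-- Euclidean norm on `ℝ^{d-1} × ℝ`. -/
def enorm2 (d : ℕ) (x : Rm (d-1) × ℝ) : ℝ := Real.sqrt (‖x.1‖ ^ 2 + x.2 ^ 2)

/-- The fractional kernel `J^s(ξ) = |ξ|^{-(d+s)}`. -/
def Js (d : ℕ) (s : ℝ) (ξ : Rm (d-1) × ℝ) : ℝ := (enorm2 d ξ) ^ (-((d : ℝ) + s))

/-- The fundamental domain `[0,1)^{d-1} × ℝ` of `𝕋^{d-1} × ℝ` inside `ℝ^d`. -/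
def fund (d : ℕ) : Set (Rm (d-1) × ℝ) := {x | ∀ i, x.1 i ∈ Set.Ico (0:ℝ) 1}

/-- The renormalized periodic fractional perimeter `𝒫^s_♯` of a (periodic) set
`A ⊆ ℝ^d`, computed on the fundamental domain and renormalized by the halfspaces. -/
def Psharp (d : ℕ) (s : ℝ) (A : Set (Rm (d-1) × ℝ)) : ℝ :=
  ∫ x in fund d, ∫ y,
    ((A.indicator (fun _ => (1:ℝ)) x) * (Aᶜ.indicator (fun _ => (1:ℝ)) y)
      - ({q : Rm (d-1) × ℝ | q.2 < 0}.indicator (fun _ => (1:ℝ)) x)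
        * ({q : Rm (d-1) × ℝ | 0 < q.2}.indicator (fun _ => (1:ℝ)) y))
      * Js d s (x - y)

/-!
Fubini along vertical lines writes the perimeter of a subgraph as a superposition over
displacements `ξ = (h, u)`,
`𝒫(g) = ∫ D_g(ξ) J(ξ) dξ`, `D_g(h, u) = ∫_{[0,1)^m} ((g x - g (x - h) - u)⁺ - (-u)⁺) dx`.
The integrand of `D_g` is a convex function of the increment `w = g x - g (x - h)` vanishing at
`w = 0`, and `w` has mean zero by periodicity. Hence `D_g ≥ 0` by Jensen and `D_{cg} ≤ c D_g` for
`0 ≤ c ≤ 1`, so that `𝒫(g) - 𝒫((1 - ε) g) ≥ ε 𝒫(g)`. Finally `𝒫(g)` is bounded below: if `g p - g q`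
is a fixed fraction of the oscillation, then `D_g` is bounded below on a ball of displacements close
to `p - q`, whose size depends only on the Lipschitz constant and on the oscillation.
-/

/-! ### Convex bodies and fundamental domains -/

section FiniteDimensional

variable {E : Type*} [NormedAddCommGroup E] [NormedSpace ℝ E] [FiniteDimensional ℝ E]
  [MeasurableSpace E] [BorelSpace E] (μ : Measure E) [μ.IsAddHaarMeasure]

-- Shrinking `S` towards `p` by a factor independent of `p` gives a subset of `S` close to `p`.
lemma exists_pos_le_measureReal_closedBall_inter_of_convex {S : Set E} (hconv : Convex ℝ S)
    (hbdd : Bornology.IsBounded S) (hpos : μ S ≠ 0) {r : ℝ} (hr : 0 < r) :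
    ∃ v : ℝ, 0 < v ∧ ∀ p ∈ S, v ≤ μ.real (Metric.closedBall p r ∩ S) := by
  have hfin : μ S ≠ ∞ := hbdd.measure_lt_top.ne
  set c : ℝ := min 1 (r / (Metric.diam S + 1))
  have hc0 : 0 < c := lt_min one_pos (div_pos hr (by linarith [Metric.diam_nonneg (s := S)]))
  have hcr : c * (Metric.diam S + 1) ≤ r :=
    (le_div_iff₀ (by linarith [Metric.diam_nonneg (s := S)])).1 (min_le_right _ _)
  refine ⟨c ^ Module.finrank ℝ E * μ.real S,
    mul_pos (by positivity) (ENNReal.toReal_pos hpos hfin), fun p hp => ?_⟩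
  have hvol : μ.real (AffineMap.homothety p c '' S) = c ^ Module.finrank ℝ E * μ.real S := by
    rw [measureReal_def, Measure.addHaar_image_homothety, ENNReal.toReal_mul,
      ENNReal.toReal_ofReal (abs_nonneg _), abs_of_nonneg (by positivity), measureReal_def]
  rw [← hvol]
  refine measureReal_mono ?_ (measure_ne_top_of_subset inter_subset_right hfin)
  rintro _ ⟨x, hx, rfl⟩
  refine ⟨?_, ?_⟩
  · rw [Metric.mem_closedBall, dist_homothety_center, Real.norm_of_nonneg hc0.le]
    nlinarith [Metric.dist_le_diam_of_mem hbdd hp hx]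
  · rw [AffineMap.homothety_eq_lineMap]
    exact hconv.lineMap_mem hp hx ⟨hc0.le, min_le_left _ _⟩

lemma setIntegral_fundamentalDomain_sub_eq {ι F : Type*} [Finite ι] [NormedAddCommGroup F]
    [NormedSpace ℝ F] (b : Module.Basis ι ℝ E) {f : E → F}
    (hf : ∀ v ∈ Submodule.span ℤ (range b), ∀ x, f (v + x) = f x) (h : E) :
    ∫ x in ZSpan.fundamentalDomain b, f (x - h) ∂μ = ∫ x in ZSpan.fundamentalDomain b, f x ∂μ := by
  have hdom := ZSpan.isAddFundamentalDomain b μ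
  have : VAddInvariantMeasure (Submodule.span ℤ (range b)) E μ :=
    inferInstanceAs <| VAddInvariantMeasure (Submodule.span ℤ (range b)).toAddSubgroup E μ
  have htranslate := (measurePreserving_vadd (-h) μ).setIntegral_image_emb
    (measurableEmbedding_const_vadd (-h)) f (ZSpan.fundamentalDomain b)
  rw [← (hdom.vadd_of_comm (-h)).setIntegral_eq hdom fun v x => hf v v.2 x, ← image_vadd,
    htranslate]
  simp only [vadd_eq_add, neg_add_eq_sub]

end FiniteDimensional

section Cube

variable {m : ℕ}

lemma cube_eq_fundamentalDomain (m : ℕ) :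
    cube m = ZSpan.fundamentalDomain (EuclideanSpace.basisFun (Fin m) ℝ).toBasis := by
  ext x
  simp [cube, ZSpan.mem_fundamentalDomain]

lemma measurableSet_cube (m : ℕ) : MeasurableSet (cube m) := by
  rw [cube_eq_fundamentalDomain]
  exact ZSpan.fundamentalDomain_measurableSet _

lemma isBounded_cube (m : ℕ) : Bornology.IsBounded (cube m) := by
  rw [cube_eq_fundamentalDomain]
  exact ZSpan.fundamentalDomain_isBounded _

lemma volume_cube_ne_zero (m : ℕ) : volume (cube m) ≠ 0 := by
  rw [cube_eq_fundamentalDomain]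
  exact ZSpan.measure_fundamentalDomain_ne_zero _

lemma convex_cube (m : ℕ) : Convex ℝ (cube m) := fun _ hx _ hy _ _ ha hb hab i =>
  convex_Ico (0 : ℝ) 1 (hx i) (hy i) ha hb hab

lemma integrableOn_cube_of_continuous {f : Rm m → ℝ} (hf : Continuous f) :
    IntegrableOn f (cube m) :=
  (hf.continuousOn.integrableOn_compact (isBounded_cube m).isCompact_closure).mono_set
    subset_closure

/-- `ℤ^m`-periodicity of a function on `ℝ^m`; such functions stand for functions on `𝕋^m`. -/
def IsIntPeriodic (g : Rm m → ℝ) : Prop :=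
  ∀ (x : Rm m) (z : Fin m → ℤ), g (x + WithLp.toLp 2 (fun i => (z i : ℝ))) = g x

namespace IsIntPeriodic

variable {g : Rm m → ℝ}

lemma const_mul (hg : IsIntPeriodic g) (c : ℝ) : IsIntPeriodic fun x => c * g x :=
  fun x z => congrArg (c * ·) (hg x z)

lemma add_eq_of_mem_span (hg : IsIntPeriodic g) {v : Rm m}
    (hv : v ∈ Submodule.span ℤ (range (EuclideanSpace.basisFun (Fin m) ℝ).toBasis)) (x : Rm m) :
    g (v + x) = g x := by
  choose z hz using (Module.Basis.mem_span_iff_repr_mem ℤ _ v).1 hv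
  have hvz : v = WithLp.toLp 2 (fun i => (z i : ℝ)) := by
    ext i
    simpa using (hz i).symm
  rw [hvz, add_comm]
  exact hg x z

lemma setIntegral_cube_sub_eq (hg : IsIntPeriodic g) (h : Rm m) :
    ∫ x in cube m, g (x - h) = ∫ x in cube m, g x := by
  rw [cube_eq_fundamentalDomain]
  exact setIntegral_fundamentalDomain_sub_eq volume _ (fun _ hv => hg.add_eq_of_mem_span hv) h

lemma exists_mem_cube (hg : IsIntPeriodic g) (x : Rm m) : ∃ y ∈ cube m, g y = g x := by
  refine ⟨x + WithLp.toLp 2 (fun i => ((-⌊x i⌋ : ℤ) : ℝ)), fun i => ?_, hg x _⟩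
  simpa [← sub_eq_add_neg] using Int.fract_lt_one (x i)

lemma exists_abs_le (hg : IsIntPeriodic g) (hcont : Continuous g) : ∃ R, ∀ x, |g x| ≤ R := by
  obtain ⟨R, hR⟩ :=
    (isBounded_cube m).isCompact_closure.exists_bound_of_continuousOn hcont.continuousOn
  refine ⟨R, fun x => ?_⟩
  obtain ⟨y, hy, hyx⟩ := hg.exists_mem_cube x
  exact hyx ▸ hR y (subset_closure hy)

lemma exists_mem_cube_lt_sub (hg : IsIntPeriodic g) {η : ℝ}
    (hη : η < (⨆ x, g x) - (⨅ x, g x)) : ∃ p ∈ cube m, ∃ q ∈ cube m, η < g p - g q := by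
  set gap := (⨆ x, g x) - (⨅ x, g x) - η
  obtain ⟨p, hp⟩ := exists_lt_of_lt_ciSup (f := g) (b := (⨆ x, g x) - gap / 2) (by linarith)
  obtain ⟨q, hq⟩ := exists_lt_of_ciInf_lt (f := g) (a := (⨅ x, g x) + gap / 2) (by linarith)
  obtain ⟨p', hp', hpp'⟩ := hg.exists_mem_cube p
  obtain ⟨q', hq', hqq'⟩ := hg.exists_mem_cube q
  exact ⟨p', hp', q', hq', by linarith⟩

lemma setIntegral_cube_increment_eq_zero (hg : IsIntPeriodic g) (hcont : Continuous g)
    (h : Rm m) : ∫ x in cube m, (g x - g (x - h)) = 0 := by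
  rw [integral_sub (integrableOn_cube_of_continuous hcont)
    (integrableOn_cube_of_continuous (by fun_prop)), hg.setIntegral_cube_sub_eq, sub_self]

end IsIntPeriodic

end Cube

/-! ### Kernels -/

/-- The interaction kernels for which the argument works: they are dominated near the origin and at
infinity as the fractional kernels of order in `(0, 1)`, and locally bounded below. A lower bound on
upward displacements suffices, and it spares the origin, where `|ξ|^{-(d+s)}` has the junk value
`0`. -/
structure IsAdmissibleKernel {m : ℕ} (J : Rm m × ℝ → ℝ) : Prop where
  measurable : Measurable J
  nonneg : ∀ ξ, 0 ≤ J ξ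
  integrable_min_one_norm_mul : Integrable fun ξ => min 1 ‖ξ‖ * J ξ
  exists_pos_le : ∀ ρ > 0, ∃ j > 0, ∀ ξ, 0 < ξ.2 → ‖ξ‖ ≤ ρ → j ≤ J ξ

section FractionalKernel

lemma integrableOn_min_one_mul_rpow {s : ℝ} (hs : s ∈ Ioo (0 : ℝ) 1) :
    IntegrableOn (fun r : ℝ => min 1 r * r ^ (-(1 + s))) (Ioi 0) := by
  rw [← Ioc_union_Ioi_eq_Ioi zero_le_one]
  refine IntegrableOn.union ?_ ?_
  · have hnear : IntegrableOn (fun r : ℝ => r ^ (-s)) (Ioc 0 1) := by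
      rw [← intervalIntegrable_iff_integrableOn_Ioc_of_le zero_le_one]
      exact intervalIntegral.intervalIntegrable_rpow' (by linarith [hs.2])
    refine hnear.congr_fun (fun r hr => ?_) measurableSet_Ioc
    dsimp only
    rw [min_eq_right hr.2, show -s = 1 + -(1 + s) by ring, Real.rpow_add hr.1, Real.rpow_one]
  · have hfar : IntegrableOn (fun r : ℝ => r ^ (-(1 + s))) (Ioi 1) :=
      integrableOn_Ioi_rpow_of_lt (by linarith [hs.1]) one_pos
    refine hfar.congr_fun (fun r hr => ?_) measurableSet_Ioi
    dsimp only
    rw [min_eq_left (le_of_lt hr), one_mul]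

lemma integrable_min_one_norm_mul_norm_rpow {E : Type*} [NormedAddCommGroup E] [NormedSpace ℝ E]
    [FiniteDimensional ℝ E] [Nontrivial E] [MeasurableSpace E] [BorelSpace E] (μ : Measure E)
    [μ.IsAddHaarMeasure] {s : ℝ} (hs : s ∈ Ioo (0 : ℝ) 1) :
    Integrable (fun x : E => min 1 ‖x‖ * ‖x‖ ^ (-((Module.finrank ℝ E : ℝ) + s))) μ := by
  refine (integrable_fun_norm_addHaar μ
    (f := fun r : ℝ => min 1 r * r ^ (-((Module.finrank ℝ E : ℝ) + s)))).2 ?_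
  refine (integrableOn_min_one_mul_rpow hs).congr_fun (fun r (hr : 0 < r) => ?_) measurableSet_Ioi
  have hexp : -(1 + s) = ((Module.finrank ℝ E - 1 : ℕ) : ℝ) + -((Module.finrank ℝ E : ℝ) + s) := by
    rw [Nat.cast_pred Module.finrank_pos]
    ring
  dsimp only
  rw [hexp, Real.rpow_add hr, Real.rpow_natCast, smul_eq_mul]
  ring

instance isAddHaarMeasure_volume_Rm_prod_real (m : ℕ) :
    (volume : Measure (Rm m × ℝ)).IsAddHaarMeasure :=
  Measure.prod.instIsAddHaarMeasure _ _

variable {d : ℕ} {s : ℝ}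

lemma norm_le_enorm2 (ξ : Rm (d - 1) × ℝ) : ‖ξ‖ ≤ enorm2 d ξ := by
  refine max_le ?_ ?_ <;> refine Real.le_sqrt_of_sq_le ?_
  · exact le_add_of_nonneg_right (sq_nonneg _)
  · rw [Real.norm_eq_abs, sq_abs]
    exact le_add_of_nonneg_left (sq_nonneg _)

lemma enorm2_le_two_mul_norm (ξ : Rm (d - 1) × ℝ) : enorm2 d ξ ≤ 2 * ‖ξ‖ := by
  refine Real.sqrt_le_iff.2 ⟨by positivity, ?_⟩
  have hfst := pow_le_pow_left₀ (norm_nonneg _) (norm_fst_le ξ) 2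
  have hsnd := pow_le_pow_left₀ (norm_nonneg _) (norm_snd_le ξ) 2
  rw [Real.norm_eq_abs, sq_abs] at hsnd
  nlinarith [sq_nonneg ‖ξ‖]

lemma measurable_Js (d : ℕ) (s : ℝ) : Measurable (Js d s) := by
  unfold Js enorm2
  fun_prop

lemma Js_nonneg (ξ : Rm (d - 1) × ℝ) : 0 ≤ Js d s ξ :=
  Real.rpow_nonneg (Real.sqrt_nonneg _) _

lemma Js_le_norm_rpow (hs : 0 < s) (ξ : Rm (d - 1) × ℝ) : Js d s ξ ≤ ‖ξ‖ ^ (-((d : ℝ) + s)) := by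
  rcases eq_or_ne ξ 0 with rfl | hξ
  · simp [Js, enorm2]
  · exact Real.rpow_le_rpow_of_nonpos (norm_pos_iff.2 hξ) (norm_le_enorm2 ξ)
      (neg_nonpos.2 (by positivity))

lemma integrable_min_one_norm_mul_Js (hd : 0 < d) (hs : s ∈ Ioo (0 : ℝ) 1) :
    Integrable fun ξ : Rm (d - 1) × ℝ => min 1 ‖ξ‖ * Js d s ξ := by
  have hdim : Module.finrank ℝ (Rm (d - 1) × ℝ) = d := by
    rw [Module.finrank_prod, finrank_euclideanSpace_fin, Module.finrank_self]
    lia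
  have hmajorant := integrable_min_one_norm_mul_norm_rpow
    (volume : Measure (Rm (d - 1) × ℝ)) hs
  rw [hdim] at hmajorant
  refine hmajorant.mono'
    ((measurable_const.min measurable_norm).mul (measurable_Js d s)).aestronglyMeasurable
    (Eventually.of_forall fun ξ => ?_)
  rw [Real.norm_of_nonneg (mul_nonneg (by positivity) (Js_nonneg ξ))]
  exact mul_le_mul_of_nonneg_left (Js_le_norm_rpow hs.1 ξ) (by positivity)

lemma isAdmissibleKernel_Js (hd : 0 < d) (hs : s ∈ Ioo (0 : ℝ) 1) :
    IsAdmissibleKernel (Js d s) where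
  measurable := measurable_Js d s
  nonneg := Js_nonneg
  integrable_min_one_norm_mul := integrable_min_one_norm_mul_Js hd hs
  exists_pos_le ρ hρ := by
    have hs0 : 0 < s := hs.1
    refine ⟨(2 * ρ) ^ (-((d : ℝ) + s)), by positivity, fun ξ hup hξρ => ?_⟩
    have hξ : ξ ≠ 0 := fun h => hup.ne' (congrArg Prod.snd h)
    exact Real.rpow_le_rpow_of_nonpos ((norm_pos_iff.2 hξ).trans_le (norm_le_enorm2 ξ))
      ((enorm2_le_two_mul_norm ξ).trans (by linarith)) (neg_nonpos.2 (by positivity))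

end FractionalKernel

/-! ### The perimeter as a superposition over displacements -/

/-- The renormalized periodic perimeter of `A` with interaction kernel `J`, which is `𝒫^s_♯` when
`J` is the fractional kernel. -/
def renormPerimeter {m : ℕ} (J : Rm m × ℝ → ℝ) (A : Set (Rm m × ℝ)) : ℝ :=
  ∫ x in cube m ×ˢ univ, ∫ y,
    (A.indicator (fun _ => (1 : ℝ)) x * Aᶜ.indicator (fun _ => (1 : ℝ)) y
      - {q : Rm m × ℝ | q.2 < 0}.indicator (fun _ => (1 : ℝ)) x
        * {q : Rm m × ℝ | 0 < q.2}.indicator (fun _ => (1 : ℝ)) y) * J (x - y)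

lemma Psharp_eq_renormPerimeter (d : ℕ) (s : ℝ) (A : Set (Rm (d - 1) × ℝ)) :
    Psharp d s A = renormPerimeter (Js d s) A := by
  have hfund : fund d = cube (d - 1) ×ˢ univ := by
    ext x
    simp [fund, cube]
  rw [Psharp, hfund, renormPerimeter]

/-- The closed subgraph of `g`, a periodic subgraph `E` of the paper with `f_E = g`. -/
def subgraph {m : ℕ} (g : Rm m → ℝ) : Set (Rm m × ℝ) := {q | q.2 ≤ g q.1}

/-- The renormalized interaction of `x` with `x - ξ` in the perimeter of the subgraph of `g`,
without the kernel. -/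
def interaction {m : ℕ} (g : Rm m → ℝ) (x ξ : Rm m × ℝ) : ℝ :=
  (subgraph g).indicator (fun _ => (1 : ℝ)) x
      * (subgraph g)ᶜ.indicator (fun _ => (1 : ℝ)) (x - ξ)
    - {q : Rm m × ℝ | q.2 < 0}.indicator (fun _ => (1 : ℝ)) x
      * {q : Rm m × ℝ | 0 < q.2}.indicator (fun _ => (1 : ℝ)) (x - ξ)

/-- The total interaction at displacement `ξ` in the perimeter of the subgraph of `g`, after
integration along vertical lines. -/
def displacementEnergy {m : ℕ} (g : Rm m → ℝ) (ξ : Rm m × ℝ) : ℝ :=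
  ∫ x in cube m, (max (g x - g (x - ξ.1) - ξ.2) 0 - max (-ξ.2) 0)

lemma volume_Ioc_symmDiff_Ioo_le (a b c d : ℝ) :
    volume (symmDiff (Ioc a b) (Ioo c d)) ≤ ENNReal.ofReal (|a - c| + |b - d|) := by
  have hsub : symmDiff (Ioc a b) (Ioo c d) ⊆ uIcc c a ∪ uIcc d b := by
    intro t ht
    simp only [mem_symmDiff, mem_Ioc, mem_Ioo, mem_union, mem_uIcc] at ht ⊢
    grind
  calc volume (symmDiff (Ioc a b) (Ioo c d)) ≤ volume (uIcc c a) + volume (uIcc d b) :=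
        (measure_mono hsub).trans (measure_union_le _ _)
    _ = ENNReal.ofReal (|a - c| + |b - d|) := by
        rw [Real.volume_interval, Real.volume_interval,
          ENNReal.ofReal_add (abs_nonneg _) (abs_nonneg _)]

lemma lintegral_enorm_indicator_one_sub {α : Type*} [MeasurableSpace α] (μ : Measure α)
    {s t : Set α} (hs : MeasurableSet s) (ht : MeasurableSet t) :
    ∫⁻ x, ‖s.indicator (fun _ => (1 : ℝ)) x - t.indicator (fun _ => (1 : ℝ)) x‖ₑ ∂μ
      = μ (symmDiff s t) := by
  simp_rw [← apply_indicator_symmDiff enorm_neg, enorm_indicator_eq_indicator_enorm, enorm_one]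
  rw [lintegral_indicator_const (hs.symmDiff ht), one_mul]

section Interaction

variable {m : ℕ} {g : Rm m → ℝ} {K : NNReal} {R : ℝ}

lemma interaction_apply (g : Rm m → ℝ) (x : Rm m) (t : ℝ) (ξ : Rm m × ℝ) :
    interaction g (x, t) ξ = (Ioc (g (x - ξ.1) + ξ.2) (g x)).indicator (fun _ => (1 : ℝ)) t
      - (Ioo ξ.2 0).indicator (fun _ => (1 : ℝ)) t := by
  simp only [interaction, subgraph, indicator_apply, mem_ofPred_eq, mem_compl_iff, mem_Ioc, mem_Ioo,
    Prod.fst_sub, Prod.snd_sub, not_le, lt_sub_iff_add_lt, zero_add, mul_ite, mul_zero, mul_one,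
    ite_and]

lemma measurable_interaction (hg : Measurable g) :
    Measurable fun z : (Rm m × ℝ) × (Rm m × ℝ) => interaction g z.1 z.2 := by
  have hsub : MeasurableSet (subgraph g) :=
    measurableSet_le measurable_snd (hg.comp measurable_fst)
  have hneg : MeasurableSet {q : Rm m × ℝ | q.2 < 0} :=
    measurableSet_lt measurable_snd measurable_const
  have hpos : MeasurableSet {q : Rm m × ℝ | 0 < q.2} :=
    measurableSet_lt measurable_const measurable_snd
  have hdiff : Measurable fun z : (Rm m × ℝ) × (Rm m × ℝ) => z.1 - z.2 :=
    measurable_fst.sub measurable_snd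
  exact (((measurable_const.indicator hsub).comp measurable_fst).mul
    ((measurable_const.indicator hsub.compl).comp hdiff)).sub
    (((measurable_const.indicator hneg).comp measurable_fst).mul
    ((measurable_const.indicator hpos).comp hdiff))

lemma integral_interaction (g : Rm m → ℝ) (x : Rm m) (ξ : Rm m × ℝ) :
    ∫ t, interaction g (x, t) ξ = max (g x - g (x - ξ.1) - ξ.2) 0 - max (-ξ.2) 0 := by
  simp_rw [interaction_apply]
  rw [integral_sub ((integrable_indicator_iff measurableSet_Ioc).2 (by simp))
    ((integrable_indicator_iff measurableSet_Ioo).2 (by simp)),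
    integral_indicator_const _ measurableSet_Ioc, integral_indicator_const _ measurableSet_Ioo,
    Real.volume_real_Ioc, Real.volume_real_Ioo, smul_eq_mul, smul_eq_mul, mul_one, mul_one,
    zero_sub, sub_add_eq_sub_sub]

lemma lintegral_enorm_interaction_le (hlip : LipschitzWith K g) (hgR : ∀ x, |g x| ≤ R)
    (x : Rm m) (ξ : Rm m × ℝ) :
    ∫⁻ t, ‖interaction g (x, t) ξ‖ₑ ≤ ENNReal.ofReal ((K + 2 + 2 * R) * min 1 ‖ξ‖) := by
  have hR : 0 ≤ R := (abs_nonneg _).trans (hgR 0)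
  have hincr : g x - g (x - ξ.1) ≤ K * ‖ξ‖ := by
    have h := hlip.dist_le_mul x (x - ξ.1)
    rw [Real.dist_eq, dist_self_sub_right] at h
    exact (le_abs_self _).trans (h.trans (by gcongr; exact norm_fst_le ξ))
  have hheight : -ξ.2 ≤ ‖ξ‖ := (neg_le_abs _).trans (norm_snd_le ξ)
  simp_rw [interaction_apply]
  rw [lintegral_enorm_indicator_one_sub _ measurableSet_Ioc measurableSet_Ioo]
  rcases le_total 1 ‖ξ‖ with hfar | hnear
  · refine (volume_Ioc_symmDiff_Ioo_le _ _ _ _).trans (ENNReal.ofReal_le_ofReal ?_)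
    rw [add_sub_cancel_right, sub_zero, min_eq_left hfar]
    linarith [hgR x, hgR (x - ξ.1), K.2]
  · calc volume (symmDiff (Ioc (g (x - ξ.1) + ξ.2) (g x)) (Ioo ξ.2 0))
        ≤ volume (Ioc (g (x - ξ.1) + ξ.2) (g x)) + volume (Ioo ξ.2 0) :=
          (measure_mono symmDiff_subset_union).trans (measure_union_le _ _)
      _ ≤ ENNReal.ofReal ((K + 1) * ‖ξ‖) + ENNReal.ofReal ‖ξ‖ := by
          rw [Real.volume_Ioc, Real.volume_Ioo]
          gcongr <;> linarith
      _ = ENNReal.ofReal ((K + 1) * ‖ξ‖ + ‖ξ‖) :=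
          (ENNReal.ofReal_add (by positivity) (norm_nonneg _)).symm
      _ ≤ ENNReal.ofReal ((K + 2 + 2 * R) * min 1 ‖ξ‖) := by
          rw [min_eq_right hnear]
          exact ENNReal.ofReal_le_ofReal (by nlinarith [norm_nonneg ξ])

lemma volume_restrict_cube_prod_univ (m : ℕ) :
    (volume : Measure (Rm m × ℝ)).restrict (cube m ×ˢ univ)
      = (volume.restrict (cube m)).prod volume := by
  rw [Measure.volume_eq_prod, ← Measure.prod_restrict, Measure.restrict_univ]

lemma setLIntegral_enorm_interaction_le (hlip : LipschitzWith K g) (hgR : ∀ x, |g x| ≤ R)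
    (ξ : Rm m × ℝ) :
    ∫⁻ x in cube m ×ˢ univ, ‖interaction g x ξ‖ₑ
      ≤ ENNReal.ofReal ((K + 2 + 2 * R) * min 1 ‖ξ‖) * volume (cube m) := by
  have hmeas : Measurable fun x => ‖interaction g x ξ‖ₑ :=
    ((measurable_interaction hlip.continuous.measurable).comp
      (measurable_id.prodMk measurable_const)).enorm
  rw [volume_restrict_cube_prod_univ, lintegral_prod _ hmeas.aemeasurable, ← setLIntegral_const]
  exact lintegral_mono fun x => lintegral_enorm_interaction_le hlip hgR x ξ

lemma setIntegral_interaction (hlip : LipschitzWith K g) (hgR : ∀ x, |g x| ≤ R)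
    (ξ : Rm m × ℝ) : ∫ x in cube m ×ˢ univ, interaction g x ξ = displacementEnergy g ξ := by
  have hint : Integrable (fun x => interaction g x ξ) (volume.restrict (cube m ×ˢ univ)) :=
    ⟨((measurable_interaction hlip.continuous.measurable).comp
      (measurable_id.prodMk measurable_const)).aestronglyMeasurable,
      (setLIntegral_enorm_interaction_le hlip hgR ξ).trans_lt
        (ENNReal.mul_lt_top ENNReal.ofReal_lt_top (isBounded_cube m).measure_lt_top)⟩
  rw [volume_restrict_cube_prod_univ] at hint ⊢
  rw [integral_prod _ hint]
  simp_rw [integral_interaction]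
  rfl

variable {J : Rm m × ℝ → ℝ}

lemma integrable_interaction_mul (hJ : IsAdmissibleKernel J) (hlip : LipschitzWith K g)
    (hgR : ∀ x, |g x| ≤ R) :
    Integrable (fun z : (Rm m × ℝ) × (Rm m × ℝ) => interaction g z.1 z.2 * J z.2)
      ((volume.restrict (cube m ×ˢ univ)).prod volume) := by
  have hR : 0 ≤ R := (abs_nonneg _).trans (hgR 0)
  have hmeas : Measurable fun z : (Rm m × ℝ) × (Rm m × ℝ) => interaction g z.1 z.2 * J z.2 :=
    (measurable_interaction hlip.continuous.measurable).mul (hJ.measurable.comp measurable_snd)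
  have hcube : volume (cube m) < ∞ := (isBounded_cube m).measure_lt_top
  refine ⟨hmeas.aestronglyMeasurable, ?_⟩
  rw [HasFiniteIntegral, lintegral_prod_symm' _ hmeas.enorm]
  calc ∫⁻ ξ, ∫⁻ x in cube m ×ˢ univ, ‖interaction g x ξ * J ξ‖ₑ
      = ∫⁻ ξ, (∫⁻ x in cube m ×ˢ univ, ‖interaction g x ξ‖ₑ) * ENNReal.ofReal (J ξ) := by
        simp_rw [enorm_mul, Real.enorm_of_nonneg (hJ.nonneg _)]
        simp_rw [lintegral_mul_const' _ _ ENNReal.ofReal_ne_top]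
    _ ≤ ∫⁻ ξ, ENNReal.ofReal ((K + 2 + 2 * R) * min 1 ‖ξ‖) * volume (cube m)
          * ENNReal.ofReal (J ξ) := by
        gcongr with ξ
        exact setLIntegral_enorm_interaction_le hlip hgR ξ
    _ = ∫⁻ ξ, ENNReal.ofReal ((K + 2 + 2 * R) * (min 1 ‖ξ‖ * J ξ)) * volume (cube m) := by
        refine lintegral_congr fun ξ => ?_
        rw [mul_right_comm, ← ENNReal.ofReal_mul (by positivity), mul_assoc]
    _ = (∫⁻ ξ, ENNReal.ofReal ((K + 2 + 2 * R) * (min 1 ‖ξ‖ * J ξ))) * volume (cube m) :=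
        lintegral_mul_const' _ _ hcube.ne
    _ < ∞ := ENNReal.mul_lt_top
        (hJ.integrable_min_one_norm_mul.const_mul _).lintegral_lt_top hcube

lemma integrable_displacementEnergy_mul (hJ : IsAdmissibleKernel J) (hlip : LipschitzWith K g)
    (hper : IsIntPeriodic g) : Integrable fun ξ => displacementEnergy g ξ * J ξ := by
  obtain ⟨R, hgR⟩ := hper.exists_abs_le hlip.continuous
  simpa only [integral_mul_const, setIntegral_interaction hlip hgR] using
    (integrable_interaction_mul hJ hlip hgR).integral_prod_right

lemma renormPerimeter_subgraph_eq (hJ : IsAdmissibleKernel J) (hlip : LipschitzWith K g)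
    (hper : IsIntPeriodic g) :
    renormPerimeter J (subgraph g) = ∫ ξ, displacementEnergy g ξ * J ξ := by
  obtain ⟨R, hgR⟩ := hper.exists_abs_le hlip.continuous
  calc renormPerimeter J (subgraph g)
      = ∫ x in cube m ×ˢ univ, ∫ ξ, interaction g x ξ * J ξ := by
        refine integral_congr_ae (Eventually.of_forall fun x => ?_)
        dsimp only
        rw [← integral_sub_left_eq_self _ volume x]
        simp only [sub_sub_cancel, interaction]
    _ = ∫ ξ, ∫ x in cube m ×ˢ univ, interaction g x ξ * J ξ :=
        integral_integral_swap (integrable_interaction_mul hJ hlip hgR)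
    _ = ∫ ξ, displacementEnergy g ξ * J ξ := by
        simp_rw [integral_mul_const, setIntegral_interaction hlip hgR]

end Interaction

/-! ### Convexity -/

section Convexity

variable {m : ℕ} {g : Rm m → ℝ}

lemma integrableOn_displacementEnergy (hg : Continuous g) (ξ : Rm m × ℝ) :
    IntegrableOn (fun x => max (g x - g (x - ξ.1) - ξ.2) 0 - max (-ξ.2) 0) (cube m) :=
  integrableOn_cube_of_continuous (by fun_prop)

lemma displacementEnergy_nonneg (hg : Continuous g) (hper : IsIntPeriodic g) (ξ : Rm m × ℝ) :
    0 ≤ displacementEnergy g ξ := by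
  rcases le_total 0 ξ.2 with hup | hdown
  · refine integral_nonneg fun x => ?_
    rw [max_eq_right (neg_nonpos.2 hup), sub_zero]
    exact le_max_right _ _
  · rw [← hper.setIntegral_cube_increment_eq_zero hg ξ.1]
    refine integral_mono (integrableOn_cube_of_continuous (by fun_prop))
      (integrableOn_displacementEnergy hg ξ) fun x => ?_
    dsimp only
    rw [max_eq_left (neg_nonneg.2 hdown)]
    linarith [le_max_left (g x - g (x - ξ.1) - ξ.2) 0]

lemma max_mul_sub_sub_max_neg_le {c : ℝ} (hc : c ∈ Icc (0 : ℝ) 1) (w u : ℝ) :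
    max (c * w - u) 0 - max (-u) 0 ≤ c * (max (w - u) 0 - max (-u) 0) := by
  obtain ⟨hc0, hc1⟩ := hc
  have hmul : c * (w - u) ≤ c * max (w - u) 0 := mul_le_mul_of_nonneg_left (le_max_left _ _) hc0
  have hmul' : (1 - c) * -u ≤ (1 - c) * max (-u) 0 :=
    mul_le_mul_of_nonneg_left (le_max_left _ _) (sub_nonneg.2 hc1)
  have hnonneg : 0 ≤ c * max (w - u) 0 := by positivity
  have hnonneg' : 0 ≤ (1 - c) * max (-u) 0 := mul_nonneg (sub_nonneg.2 hc1) (le_max_right _ _)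
  have hmax : max (c * w - u) 0 ≤ c * max (w - u) 0 + (1 - c) * max (-u) 0 :=
    max_le (by linarith) (by linarith)
  linarith

lemma displacementEnergy_const_mul_le (hg : Continuous g) {c : ℝ} (hc : c ∈ Icc (0 : ℝ) 1)
    (ξ : Rm m × ℝ) :
    displacementEnergy (fun x => c * g x) ξ ≤ c * displacementEnergy g ξ := by
  rw [displacementEnergy, displacementEnergy, ← integral_const_mul]
  refine integral_mono (integrableOn_displacementEnergy (hg.const_mul c) ξ)
    ((integrableOn_displacementEnergy hg ξ).const_mul c) fun x => ?_
  dsimp only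
  rw [← mul_sub]
  exact max_mul_sub_sub_max_neg_le hc _ _

lemma renormPerimeter_subgraph_const_mul_le {J : Rm m × ℝ → ℝ} (hJ : IsAdmissibleKernel J)
    {K : NNReal} (hlip : LipschitzWith K g) (hper : IsIntPeriodic g) {c : ℝ}
    (hc : c ∈ Icc (0 : ℝ) 1) :
    renormPerimeter J (subgraph fun x => c * g x) ≤ c * renormPerimeter J (subgraph g) := by
  have hlipc : LipschitzWith (‖c‖₊ * K) fun x => c * g x := (lipschitzWith_smul c).comp hlip
  rw [renormPerimeter_subgraph_eq hJ hlip hper, ← integral_const_mul,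
    renormPerimeter_subgraph_eq hJ hlipc (hper.const_mul c)]
  refine integral_mono (integrable_displacementEnergy_mul hJ hlipc (hper.const_mul c))
    ((integrable_displacementEnergy_mul hJ hlip hper).const_mul c) fun ξ => ?_
  dsimp only
  rw [← mul_assoc]
  exact mul_le_mul_of_nonneg_right (displacementEnergy_const_mul_le hlip.continuous hc ξ)
    (hJ.nonneg ξ)

end Convexity

/-! ### The lower bound -/

section LowerBound

variable {m : ℕ}

lemma measureReal_mul_le_displacementEnergy {g : Rm m → ℝ} (hg : Continuous g) {ξ : Rm m × ℝ}
    (hξ : 0 ≤ ξ.2) {S : Set (Rm m)} (hS : MeasurableSet S) (hSc : S ⊆ cube m) {η : ℝ}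
    (hη : ∀ x ∈ S, η ≤ g x - g (x - ξ.1) - ξ.2) :
    volume.real S * η ≤ displacementEnergy g ξ := by
  have hint := integrableOn_displacementEnergy hg ξ
  rw [mul_comm]
  calc η * volume.real S ≤ ∫ x in S, (max (g x - g (x - ξ.1) - ξ.2) 0 - max (-ξ.2) 0) := by
        refine setIntegral_ge_of_const_le_real hS
          (measure_ne_top_of_subset hSc (isBounded_cube m).measure_lt_top.ne)
          (fun x hx => ?_) (hint.mono_set hSc)
        rw [max_eq_right (neg_nonpos.2 hξ), sub_zero]
        exact le_max_of_le_left (hη x hx)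
    _ ≤ displacementEnergy g ξ := by
        refine setIntegral_mono_set hint (Eventually.of_forall fun x => ?_)
          (Eventually.of_forall hSc)
        simp [max_eq_right (neg_nonpos.2 hξ)]

lemma le_increment_of_mem_closedBall {E : Type*} [SeminormedAddCommGroup E] {g : E → ℝ}
    {K : NNReal} (hlip : LipschitzWith K g) {p q x h : E} {r : ℝ} (hx : x ∈ Metric.closedBall p r)
    (hh : h ∈ Metric.closedBall (p - q) r) :
    g p - g q - 3 * K * r ≤ g x - g (x - h) := by
  rw [mem_closedBall_iff_norm] at hx hh
  have hxh : ‖x - h - q‖ ≤ 2 * r := by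
    rw [show x - h - q = (x - p) - (h - (p - q)) by abel, two_mul]
    exact (norm_sub_le _ _).trans (add_le_add hx hh)
  have hp : g p - g x ≤ K * r := by
    rw [← neg_sub]
    exact (neg_le_abs _).trans ((hlip.norm_sub_le x p).trans (by gcongr))
  have hq : g (x - h) - g q ≤ K * (2 * r) :=
    (le_abs_self _).trans ((hlip.norm_sub_le _ _).trans (by gcongr))
  linarith

-- The ball is centred at height `2 * r` so that it lies in the upper halfspace, where the
-- integrand of `displacementEnergy` is nonnegative.
lemma exists_pos_le_displacementEnergy (m : ℕ) (K : NNReal) {δ : ℝ} (hδ : 0 < δ) :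
    ∃ r > 0, ∃ e > 0, ∀ g : Rm m → ℝ, LipschitzWith K g → IsIntPeriodic g →
      δ ≤ (⨆ x, g x) - (⨅ x, g x) → ∃ p ∈ cube m, ∃ q ∈ cube m,
        ∀ ξ ∈ Metric.closedBall (p - q, 2 * r) r, 0 < ξ.2 ∧ e ≤ displacementEnergy g ξ := by
  set r : ℝ := δ / (12 * (K + 1)) with hr
  have hr0 : 0 < r := by positivity
  have hKr : 3 * K * r + 3 * r = δ / 4 := by
    rw [hr]
    field_simp
    norm_num
  obtain ⟨v, hv0, hv⟩ := exists_pos_le_measureReal_closedBall_inter_of_convex volume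
    (convex_cube m) (isBounded_cube m) (volume_cube_ne_zero m) hr0
  refine ⟨r, hr0, v * (δ / 4), by positivity, fun g hlip hper hosc => ?_⟩
  obtain ⟨p, hp, q, hq, hpq⟩ := hper.exists_mem_cube_lt_sub (η := δ / 2) (by linarith)
  refine ⟨p, hp, q, hq, fun ξ hξ => ?_⟩
  rw [← closedBall_prod_same] at hξ
  obtain ⟨hξ₁, hξ₂⟩ := hξ
  rw [Real.closedBall_eq_Icc, mem_Icc] at hξ₂
  have hup : 0 < ξ.2 := by linarith
  refine ⟨hup, ?_⟩
  calc v * (δ / 4) ≤ volume.real (Metric.closedBall p r ∩ cube m) * (δ / 4) := by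
        gcongr
        exact hv p hp
    _ ≤ displacementEnergy g ξ := by
        refine measureReal_mul_le_displacementEnergy hlip.continuous hup.le
          (Metric.isClosed_closedBall.measurableSet.inter (measurableSet_cube m))
          inter_subset_right fun x hx => ?_
        linarith [le_increment_of_mem_closedBall hlip hx.1 hξ₁]

lemma measureReal_closedBall_mul_le_integral {E : Type*} [NormedAddCommGroup E]
    [NormedSpace ℝ E] [FiniteDimensional ℝ E] [MeasurableSpace E] [BorelSpace E] (μ : Measure E)
    [μ.IsAddHaarMeasure] {f : E → ℝ} (hf : Integrable f μ) (hf0 : ∀ x, 0 ≤ f x) {c : E} {r a : ℝ}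
    (ha : ∀ x ∈ Metric.closedBall c r, a ≤ f x) :
    μ.real (Metric.closedBall 0 r) * a ≤ ∫ x, f x ∂μ := by
  calc μ.real (Metric.closedBall 0 r) * a = a * μ.real (Metric.closedBall c r) := by
        rw [← Measure.addHaar_real_closedBall_center μ c, mul_comm]
    _ ≤ ∫ x in Metric.closedBall c r, f x ∂μ :=
        setIntegral_ge_of_const_le_real Metric.isClosed_closedBall.measurableSet
          measure_closedBall_lt_top.ne ha hf.integrableOn
    _ ≤ ∫ x, f x ∂μ := setIntegral_le_integral hf (Eventually.of_forall hf0)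

lemma norm_le_of_mem_closedBall_sub {p q : Rm m} (hp : p ∈ cube m) (hq : q ∈ cube m) {r t : ℝ}
    {ξ : Rm m × ℝ} (hξ : ξ ∈ Metric.closedBall (p - q, t) r) :
    ‖ξ‖ ≤ Metric.diam (cube m) + |t| + r := by
  refine (norm_le_of_mem_closedBall hξ).trans (add_le_add_left (max_le ?_ ?_) r)
  · rw [← dist_eq_norm]
    exact (Metric.dist_le_diam_of_mem (isBounded_cube m) hp hq).trans
      (le_add_of_nonneg_right (abs_nonneg t))
  · exact le_add_of_nonneg_left Metric.diam_nonneg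

lemma exists_pos_le_renormPerimeter_subgraph {J : Rm m × ℝ → ℝ} (hJ : IsAdmissibleKernel J)
    (K : NNReal) {δ : ℝ} (hδ : 0 < δ) :
    ∃ C > 0, ∀ g : Rm m → ℝ, LipschitzWith K g → IsIntPeriodic g →
      δ ≤ (⨆ x, g x) - (⨅ x, g x) → C ≤ renormPerimeter J (subgraph g) := by
  obtain ⟨r, hr, e, he, henergy⟩ := exists_pos_le_displacementEnergy m K hδ
  obtain ⟨j, hj, hjJ⟩ := hJ.exists_pos_le (Metric.diam (cube m) + |2 * r| + r)
    (add_pos_of_nonneg_of_pos (add_nonneg Metric.diam_nonneg (abs_nonneg _)) hr)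
  have hball : 0 < volume.real (Metric.closedBall (0 : Rm m × ℝ) r) :=
    ENNReal.toReal_pos (Metric.measure_closedBall_pos volume _ hr).ne'
      measure_closedBall_lt_top.ne
  refine ⟨volume.real (Metric.closedBall (0 : Rm m × ℝ) r) * (e * j), by positivity,
    fun g hlip hper hosc => ?_⟩
  obtain ⟨p, hp, q, hq, hξ⟩ := henergy g hlip hper hosc
  have hnonneg := displacementEnergy_nonneg hlip.continuous hper
  rw [renormPerimeter_subgraph_eq hJ hlip hper]
  refine measureReal_closedBall_mul_le_integral volume
    (integrable_displacementEnergy_mul hJ hlip hper)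
    (fun ξ => mul_nonneg (hnonneg ξ) (hJ.nonneg ξ)) (c := (p - q, 2 * r)) fun ξ hmem => ?_
  obtain ⟨hup, hle⟩ := hξ ξ hmem
  exact mul_le_mul hle (hjJ ξ hup (norm_le_of_mem_closedBall_sub hp hq hmem)) hj.le (hnonneg ξ)

end LowerBound

theorem Psharp_assumptionH_general {m : ℕ} {J : Rm m × ℝ → ℝ} (hJ : IsAdmissibleKernel J)
    (K : NNReal) {δ : ℝ} (hδ : 0 < δ) :
    ∃ C > 0, ∀ g : Rm m → ℝ, LipschitzWith K g → IsIntPeriodic g →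
      δ ≤ (⨆ x, g x) - (⨅ x, g x) → ∀ ε ∈ Icc (0 : ℝ) 1,
        C * ε ≤ renormPerimeter J (subgraph g)
          - renormPerimeter J (subgraph fun x => (1 - ε) * g x) := by
  obtain ⟨C, hC, hlower⟩ := exists_pos_le_renormPerimeter_subgraph hJ K hδ
  refine ⟨C, hC, fun g hlip hper hosc ε hε => ?_⟩
  have hscale := renormPerimeter_subgraph_const_mul_le hJ hlip hper
    (c := 1 - ε) ⟨by linarith [hε.2], by linarith [hε.1]⟩
  have hmul := mul_le_mul_of_nonneg_right (hlower g hlip hper hosc) hε.1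
  linarith

/-- The renormalized periodic fractional perimeter satisfies assumption (H). -/
theorem Psharp_assumptionH (d : ℕ) (hd : 2 ≤ d) (s : ℝ) (hs : s ∈ Set.Ioo (0:ℝ) 1)
    (L δ : ℝ) (hL : 0 < L) (hδ : 0 < δ) :
    ∃ ε₀ ∈ Set.Ioo (0:ℝ) 1, ∃ C : ℝ, 0 < C ∧
      ∀ R : ℝ, 0 < R → ∀ g : Rm (d-1) → ℝ,
        LipschitzWith (Real.toNNReal L) g →
        (∀ (x : Rm (d-1)) (z : Fin (d-1) → ℤ),
          g (x + (show Rm (d-1) from WithLp.toLp 2 (fun i => (z i : ℝ)))) = g x) →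
        (∀ x, |g x| ≤ R) →
        δ ≤ (⨆ x, g x) - (⨅ x, g x) →
        ∀ ε : ℝ, 0 < ε → ε ≤ ε₀ →
          C * ε ≤ Psharp d s {q : Rm (d-1) × ℝ | q.2 ≤ g q.1}
                    - Psharp d s {q : Rm (d-1) × ℝ | q.2 ≤ (1 - ε) * g q.1} := by
  obtain ⟨C, hC, hgap⟩ :=
    Psharp_assumptionH_general (isAdmissibleKernel_Js (d := d) (by lia) hs) L.toNNReal hδ
  simp_rw [Psharp_eq_renormPerimeter]
  exact ⟨1 / 2, by norm_num, C, hC, fun R _ g hlip hper _ hosc ε hε hε₀ =>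
    hgap g hlip hper hosc ε ⟨hε.le, by linarith⟩⟩
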